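/- arXiv:1708.06092 — 2 statements merged into one kernel-verified Lean document; each statement's English description precedes it below -/
import Mathlib

section
/- Let $f \in \mathbb{C}[X_0,X_1,X_2]$ and $g \in \mathbb{C}[X_3,X_4,X_5]$ be homogeneous polynomials of degree 3, and set $F(z_0,\dots,z_5) = f(z_0,z_1,z_2) + g(z_3,z_4,z_5)$. For every nonzero $z \in \mathbb{C}^6$ with $F(z) = 0$ and $f(z_0,z_1,z_2) \neq 0$, there exist $x, y \in \mathbb{C}^3$ and $v, w \in \mathbb{C}$ with $f(x) + v^3 = 0$ and $g(y) + w^3 = 0$ such that $(w x_0, w x_1, w x_2, -v y_0, -v y_1, -v y_2) = z$. In particular, the Shioda map $Y_1 \times Y_2 \dashrightarrow Y$ is dominant: its image contains the nonempty Zariski-open subset of $Y$ where $f \neq 0$. -/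
open MvPolynomial

/-!
On the affine chart `w = 1` the Shioda map can be inverted by hand. Write `z = (a, b)`, so that
`g(b) = -f(a)`, and extract a root `v ^ n = -f(a)`. Then `(a, v)` lies on the cone over `Y₁`, and
since `v ≠ 0` the vector `b` can be rescaled to `y = (ε v)⁻¹ b`. Homogeneity of `g` and `ε ^ n = -1`
give `g(y) = -g(b) / v ^ n = -1`, so `(y, 1)` lies on the cone over `Y₂`. For cubics, `ε = -1`.
-/

theorem eval_smul_of_isHomogeneous {σ R : Type*} [CommSemiring R] {p : MvPolynomial σ R} {n : ℕ}
    (hp : p.IsHomogeneous n) (c : R) (x : σ → R) :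
    eval (c • x) p = c ^ n * eval x p := by
  rw [eval_eq, eval_eq, Finset.mul_sum]
  refine Finset.sum_congr rfl fun d hd => ?_
  calc coeff d p * ∏ i ∈ d.support, (c • x) i ^ d i
      = coeff d p * (c ^ (∑ i ∈ d.support, d i) * ∏ i ∈ d.support, x i ^ d i) := by
        simp only [Pi.smul_apply, smul_eq_mul, mul_pow, Finset.prod_mul_distrib,
          Finset.prod_pow_eq_pow_sum]
    _ = c ^ n * (coeff d p * ∏ i ∈ d.support, x i ^ d i) := by
        rw [← hp.degree_eq_sum_deg_support hd, mul_left_comm]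

section Field

variable {K : Type*} [Field K] {n : ℕ} {ε : K}

theorem eval_inv_smul_eq_neg_one {σ : Type*} {g : MvPolynomial σ K} (hg : g.IsHomogeneous n)
    (hε : ε ^ n = -1) {v : K} (hv : v ≠ 0) {b : σ → K} (hb : eval b g = v ^ n) :
    eval ((ε * v)⁻¹ • b) g = -1 := by
  rw [eval_smul_of_isHomogeneous hg, hb, inv_pow, mul_pow, hε, neg_one_mul, inv_neg, neg_mul,
    inv_mul_cancel₀ (pow_ne_zero n hv)]

theorem stmt_7_general {m k : ℕ} (hroot : Function.Surjective fun u : K => u ^ n)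
    (hε : ε ^ n = -1) (f : MvPolynomial (Fin m) K) {g : MvPolynomial (Fin k) K}
    (hg : g.IsHomogeneous n) (z : Fin (m + k) → K)
    (hz : eval z (rename (Fin.castAdd k) f + rename (Fin.natAdd m) g) = 0)
    (hfz : eval (fun i => z (Fin.castAdd k i)) f ≠ 0) :
    ∃ (x : Fin m → K) (y : Fin k → K) (v w : K),
      eval x f + v ^ n = 0 ∧ eval y g + w ^ n = 0 ∧
      Fin.append (w • x) ((ε * v) • y) = z := by
  set a : Fin m → K := fun i => z (Fin.castAdd k i)
  set b : Fin k → K := fun i => z (Fin.natAdd m i)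
  have hab : eval a f + eval b g = 0 := by
    rwa [map_add, eval_rename, eval_rename] at hz
  obtain ⟨v, hv : v ^ n = -eval a f⟩ := hroot (-eval a f)
  have hn : n ≠ 0 := by
    rintro rfl
    obtain ⟨u, hu⟩ := hroot 0
    exact one_ne_zero ((pow_zero u).symm.trans hu)
  have hv0 : v ≠ 0 := ne_zero_pow hn (hv ▸ neg_ne_zero.mpr hfz)
  have hε0 : ε ≠ 0 := ne_zero_pow hn (hε ▸ neg_ne_zero.mpr one_ne_zero)
  have hb : eval b g = v ^ n := hv ▸ eq_neg_of_add_eq_zero_right hab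
  refine ⟨a, (ε * v)⁻¹ • b, v, 1, ?_, ?_, ?_⟩
  · rw [hv, add_neg_cancel]
  · rw [eval_inv_smul_eq_neg_one hg hε hv0 hb, one_pow, neg_add_cancel]
  · rw [one_smul, smul_inv_smul₀ (mul_ne_zero hε0 hv0)]
    exact Fin.append_castAdd_natAdd

end Field

/-- Every nonzero `z ∈ ℂ⁶` with `F(z) = 0` and `f(z₀,z₁,z₂) ≠ 0` is in the
image of the Shioda map: there are `x, y ∈ ℂ³` and `v, w ∈ ℂ` with `f(x) + v³ = 0`,
`g(y) + w³ = 0` and `(w·x, -v·y) = z`. In particular the Shioda map is dominant. -/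
theorem stmt_7 (f g : MvPolynomial (Fin 3) ℂ)
    (hf : f.IsHomogeneous 3) (hg : g.IsHomogeneous 3)
    (F : MvPolynomial (Fin 6) ℂ)
    (hF : F = rename (Fin.castAdd 3) f + rename (Fin.natAdd 3) g) :
    ∀ z : Fin 6 → ℂ, z ≠ 0 → eval z F = 0 →
      eval (fun i : Fin 3 => z (Fin.castAdd 3 i)) f ≠ 0 →
      ∃ (x y : Fin 3 → ℂ) (v w : ℂ),
        eval x f + v ^ 3 = 0 ∧ eval y g + w ^ 3 = 0 ∧
        (Fin.append (w • x) ((-v) • y) : Fin 6 → ℂ) = z := by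
  intro z _ hz hfz
  have hroot : Function.Surjective fun u : ℂ => u ^ 3 :=
    fun c => IsAlgClosed.exists_pow_nat_eq c three_pos
  simpa only [neg_one_mul] using
    stmt_7_general hroot (Odd.neg_one_pow (by decide)) f hg z (hF ▸ hz) hfz
end

section
/- Let $f \in \mathbb{C}[X_0,X_1,X_2]$ and $g \in \mathbb{C}[X_3,X_4,X_5]$ be homogeneous polynomials of degree 3 that each define a smooth plane curve, set $F(z_0,\dots,z_5) = f(z_0,z_1,z_2) + g(z_3,z_4,z_5)$, let $\omega$ be a primitive third root of unity, and let $u(z_0,\dots,z_5) = (z_0,z_1,z_2,\omega z_3,\omega z_4,\omega z_5)$. Then a 2-dimensional linear subspace $L \subseteq \mathbb{C}^6$ satisfies both $F|_L \equiv 0$ and $u(L) = L$ if and only if there exist nonzero vectors $a, b \in \mathbb{C}^3$ with $f(a) = 0$ and $g(b) = 0$ such that $L = \mathrm{span}\big((a_0,a_1,a_2,0,0,0),\,(0,0,0,b_0,b_1,b_2)\big)$. In other words, the fixed points of the induced automorphism $u_X$ on the lines of the cubic fourfold $Y = \{F=0\}$ are exactly the lines joining a point of the plane cubic $\{f = 0\}$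 to a point of the plane cubic $\{g = 0\}$. -/
open MvPolynomial

/-!
A subspace of `V × W` invariant under `(x, y) ↦ (x, ω y)`, with `ω ≠ 0, 1`, is the sum of its
intersections with the two eigenspaces, hence a product `A × B`; and `f(x) + g(y)` vanishes on
`A × B` iff `f` vanishes on `A` and `g` on `B`. A smooth plane curve of degree at least `2` contains
no line, so `dim A ≤ 1` and `dim B ≤ 1`, and `dim A + dim B = 2` makes both equal to `1`.

Suppose indeed that a form `f` of degree at least `2` vanishes on a hyperplane `S` with `dim S ≥ 2`,
and choose `c` outside `S`. The form `∂_c f` has positive degree, so it has a nonzero zero `x ∈ S`.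
The differential of `f` at `x` then kills `c`, and it kills `S` because `f` vanishes on `S`; so it
is zero, and `x` is a singular point.
-/

section LinearAlgebra

variable {K V W : Type*}

theorem exists_sup_span_singleton_eq_top [DivisionRing K] [AddCommGroup V] [Module K V]
    [Module.Finite K V] {S : Submodule K V}
    (hS : Module.finrank K V ≤ Module.finrank K S + 1) :
    ∃ c : V, S ⊔ K ∙ c = ⊤ := by
  have hquot : Module.finrank K (V ⧸ S) ≤ 1 := by
    have := S.finrank_quotient_add_finrank
    omega
  obtain ⟨q, hq⟩ := finrank_le_one_iff.mp hquot
  obtain ⟨c, rfl⟩ := S.mkQ_surjective q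
  refine ⟨c, ?_⟩
  have hspan : K ∙ S.mkQ c = ⊤ :=
    eq_top_iff.mpr fun w _ => Submodule.mem_span_singleton.mpr (hq w)
  rw [← Submodule.comap_map_mkQ, Submodule.map_span, Set.image_singleton, hspan,
    Submodule.comap_top]

theorem finrank_eq_one_iff_exists_eq_span_singleton [DivisionRing K] [AddCommGroup V] [Module K V]
    {S : Submodule K V} :
    Module.finrank K S = 1 ↔ ∃ v ≠ 0, S = K ∙ v := by
  refine ⟨fun h => ?_, fun ⟨v, hv, hS⟩ => hS ▸ finrank_span_singleton hv⟩
  have : Module.Finite K S := Module.finite_of_finrank_eq_succ h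
  obtain ⟨v, rfl⟩ := (S.finrank_le_one_iff_isPrincipal.mp h.le).principal
  exact ⟨v, by rintro rfl; rw [Submodule.span_zero_singleton] at h; simp at h, rfl⟩

theorem finrank_submodule_prod [Ring K] [StrongRankCondition K] [AddCommGroup V] [Module K V]
    [AddCommGroup W] [Module K W] (A : Submodule K V) (B : Submodule K W)
    [Module.Free K A] [Module.Free K B] [Module.Finite K A] [Module.Finite K B] :
    Module.finrank K (A.prod B) = Module.finrank K A + Module.finrank K B := by
  have hinj : Function.Injective (A.subtype.prodMap B.subtype) :=
    A.subtype_injective.prodMap B.subtype_injective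
  rw [← Module.finrank_prod, ← LinearMap.finrank_range_of_inj hinj, LinearMap.range_prodMap,
    A.range_subtype, B.range_subtype]

theorem span_singleton_prod_span_singleton [Semiring K] [AddCommMonoid V] [Module K V]
    [AddCommMonoid W] [Module K W] (a : V) (b : W) :
    (K ∙ a).prod (K ∙ b) = Submodule.span K {(a, 0), (0, b)} := by
  rw [← LinearMap.span_inl_union_inr, Set.image_singleton, Set.image_singleton,
    Set.singleton_union, LinearMap.inl_apply, LinearMap.inr_apply]

theorem map_id_prodMap_smul_eq_self_iff [Field K] [AddCommGroup V] [Module K V]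
    [AddCommGroup W] [Module K W] {ω : K} (hω0 : ω ≠ 0) (hω1 : ω ≠ 1)
    {S : Submodule K (V × W)} :
    S.map (LinearMap.id.prodMap (ω • LinearMap.id)) = S ↔
      ∃ (A : Submodule K V) (B : Submodule K W), S = A.prod B := by
  constructor
  · intro h
    have hinr : ∀ x y, (x, y) ∈ S → (0, y) ∈ S := by
      intro x y hxy
      have huxy : (x, ω • y) ∈ S := h ▸ Submodule.mem_map_of_mem hxy
      have hdiff : (ω - 1) • ((0, y) : V × W) ∈ S := by
        simpa [sub_smul] using S.sub_mem huxy hxy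
      exact (S.smul_mem_iff (sub_ne_zero.mpr hω1)).mp hdiff
    refine ⟨S.comap (LinearMap.inl K V W), S.comap (LinearMap.inr K V W),
      Submodule.ext fun ⟨x, y⟩ => ⟨fun hxy => ⟨?_, hinr x y hxy⟩, fun ⟨hx, hy⟩ => ?_⟩⟩
    · simpa using S.sub_mem hxy (hinr x y hxy)
    · simpa using S.add_mem hx hy
  · rintro ⟨A, B, rfl⟩
    rw [LinearMap.prodMap_map_prod, Submodule.map_smul _ _ _ hω0, Submodule.map_id,
      Submodule.map_id]

end LinearAlgebra

section Forms

variable {σ R K : Type*}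

theorem eval_smul_of_isHomogeneous_s10 [CommSemiring R] {f : MvPolynomial σ R} {d : ℕ}
    (hf : f.IsHomogeneous d) (t : R) (x : σ → R) : eval (t • x) f = t ^ d * eval x f := by
  rw [eval_eq, eval_eq, Finset.mul_sum]
  refine Finset.sum_congr rfl fun m hm => ?_
  have hdeg : ∑ i ∈ m.support, m i = d := by
    simp [← hf (mem_support_iff.mp hm), Finsupp.weight_apply, Finsupp.sum]
  simp only [Pi.smul_apply, smul_eq_mul, mul_pow, Finset.prod_mul_distrib,
    Finset.prod_pow_eq_pow_sum, hdeg]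
  ring

theorem eval_zero_of_isHomogeneous [CommSemiring R] {f : MvPolynomial σ R} {d : ℕ}
    (hf : f.IsHomogeneous d) (hd : d ≠ 0) : eval 0 f = 0 := by
  simpa [hd] using eval_smul_of_isHomogeneous_s10 hf 0 0

theorem forall_mem_span_singleton_eval_eq_zero_iff [CommSemiring R] {f : MvPolynomial σ R} {d : ℕ}
    (hf : f.IsHomogeneous d) {a : σ → R} :
    (∀ x ∈ R ∙ a, eval x f = 0) ↔ eval a f = 0 := by
  refine ⟨fun h => h a (Submodule.mem_span_singleton_self a), fun h x hx => ?_⟩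
  obtain ⟨t, rfl⟩ := Submodule.mem_span_singleton.mp hx
  rw [eval_smul_of_isHomogeneous_s10 hf, h, mul_zero]

theorem derivation_aeval {A M : Type*} [Fintype σ] [CommSemiring R] [CommSemiring A] [Algebra R A]
    [AddCommMonoid M] [Module A M] [Module R M] (D : Derivation R A M) (p : σ → A)
    (f : MvPolynomial σ R) :
    D (aeval p f) = ∑ i, aeval p (pderiv i f) • D (p i) := by
  classical
  induction f using MvPolynomial.induction_on with
  | C r => simp
  | add f g hf hg => simp [hf, hg, add_smul, Finset.sum_add_distrib]
  | mul_X f j hf =>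
    have hterm (i : σ) : aeval p (pderiv i (f * X j)) • D (p i) =
        (if i = j then aeval p f • D (p j) else 0) + p j • aeval p (pderiv i f) • D (p i) := by
      rcases eq_or_ne i j with rfl | hij
      · simp [add_smul, smul_smul]
      · simp [pderiv_X_of_ne hij.symm, hij, smul_smul]
    simp_rw [hterm, Finset.sum_add_distrib, ← Finset.smul_sum, ← hf]
    simp

/-- The restriction of `f` to the affine line through `x` with direction `v`, as the univariate
polynomial `f(x + t v)` in the parameter `t`. -/
noncomputable def restrictLine [CommSemiring R] (f : MvPolynomial σ R) (x v : σ → R) :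
    Polynomial R :=
  aeval (fun i => Polynomial.C (x i) + Polynomial.C (v i) * Polynomial.X) f

theorem eval_restrictLine [CommSemiring R] (f : MvPolynomial σ R) (x v : σ → R) (t : R) :
    (restrictLine f x v).eval t = eval (x + t • v) f := by
  induction f using MvPolynomial.induction_on with
  | C r => simp [restrictLine]
  | add f g hf hg => simp_all [restrictLine]
  | mul_X f i hf => simp_all [restrictLine, mul_comm t]

/-- The directional derivative `∂_v f = ∑ i, v i * ∂f/∂X_i`, as a linear map in `v`. -/
noncomputable def dirDeriv [Fintype σ] [CommSemiring R] (f : MvPolynomial σ R) :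
    (σ → R) →ₗ[R] MvPolynomial σ R :=
  Fintype.linearCombination R fun i => pderiv i f

theorem dirDeriv_single [Fintype σ] [DecidableEq σ] [CommSemiring R] (f : MvPolynomial σ R)
    (i : σ) : dirDeriv f (Pi.single i 1) = pderiv i f := by
  simp [dirDeriv]

theorem isHomogeneous_dirDeriv [Fintype σ] [CommSemiring R] {f : MvPolynomial σ R} {d : ℕ}
    (hf : f.IsHomogeneous d) (v : σ → R) : (dirDeriv f v).IsHomogeneous (d - 1) := by
  refine IsHomogeneous.sum _ _ _ fun i _ => ?_
  rw [smul_eq_C_mul]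
  exact hf.pderiv.C_mul _

theorem eval_zero_derivative_restrictLine [Fintype σ] [CommSemiring R]
    (f : MvPolynomial σ R) (x v : σ → R) :
    (Polynomial.derivative (restrictLine f x v)).eval 0 = eval x (dirDeriv f v) := by
  have hpderiv (i : σ) : (restrictLine (pderiv i f) x v).eval 0 = eval x (pderiv i f) := by
    rw [eval_restrictLine, zero_smul, add_zero]
  have hchain : Polynomial.derivative (restrictLine f x v) =
      ∑ i, restrictLine (pderiv i f) x v * Polynomial.C (v i) := by
    rw [restrictLine, ← Polynomial.derivative'_apply, derivation_aeval]
    simp [restrictLine]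
  simp [hchain, Polynomial.eval_finsetSum, hpderiv, dirDeriv, Fintype.linearCombination_apply,
    mul_comm]

theorem eval_dirDeriv_eq_zero [Fintype σ] [CommRing R] [IsDomain R] [Infinite R]
    {f : MvPolynomial σ R} {x v : σ → R} (h : ∀ t : R, eval (x + t • v) f = 0) :
    eval x (dirDeriv f v) = 0 := by
  have hzero : restrictLine f x v = 0 :=
    Polynomial.funext fun t => by rw [eval_restrictLine, h, Polynomial.eval_zero]
  rw [← eval_zero_derivative_restrictLine, hzero, Polynomial.derivative_zero, Polynomial.eval_zero]

theorem eval_add_eq_of_forall_eval_ne_zero [Field K] [IsAlgClosed K] {f : MvPolynomial σ K}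
    {x v : σ → K} (h : ∀ t : K, eval (x + t • v) f ≠ 0) : eval (x + v) f = eval x f := by
  have hdeg : (restrictLine f x v).degree = 0 := by
    by_contra hdeg
    obtain ⟨t, ht⟩ := IsAlgClosed.exists_root _ hdeg
    exact h t (by rwa [Polynomial.IsRoot, eval_restrictLine] at ht)
  have hconst (t : K) : eval (x + t • v) f = (restrictLine f x v).coeff 0 := by
    rw [← eval_restrictLine, Polynomial.eq_C_of_degree_eq_zero hdeg, Polynomial.eval_C,
      Polynomial.coeff_C_zero]
  simpa using (hconst 1).trans (hconst 0).symm

theorem eval_eq_of_linearIndependent [Field K] [IsAlgClosed K] {f : MvPolynomial σ K}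
    {S : Submodule K (σ → K)} (hS : ∀ x ∈ S, x ≠ 0 → eval x f ≠ 0) {x y : σ → K}
    (hx : x ∈ S) (hy : y ∈ S) (hxy : LinearIndependent K ![x, y]) : eval x f = eval y f := by
  have hline (t : K) : eval (x + t • (y - x)) f ≠ 0 := by
    refine hS _ (S.add_mem hx (S.smul_mem t (S.sub_mem hy hx))) fun hzero => ?_
    obtain ⟨h1t, ht⟩ := LinearIndependent.pair_iff.mp hxy (1 - t) t (by rw [← hzero]; module)
    simp [ht] at h1t
  simpa using (eval_add_eq_of_forall_eval_ne_zero hline).symm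

/-- If `f` had no nonzero zero on `S`, it would be constant on the affine lines of `S` missing the
origin, so `f(s a) = f(b) = f(a)` for independent `a, b` and all `s ≠ 0`; but
`f(s a) = s ^ d f(a)`. -/
theorem exists_mem_ne_zero_eval_eq_zero [Field K] [IsAlgClosed K] {f : MvPolynomial σ K} {d : ℕ}
    (hf : f.IsHomogeneous d) (hd : d ≠ 0) {S : Submodule K (σ → K)}
    (hS : 1 < Module.finrank K S) :
    ∃ x ∈ S, x ≠ 0 ∧ eval x f = 0 := by
  by_contra! hne
  have : Nontrivial S := Module.nontrivial_of_finrank_pos (zero_lt_one.trans hS)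
  obtain ⟨a, ha⟩ := exists_ne (0 : S)
  obtain ⟨b, hab⟩ := exists_linearIndependent_pair_of_one_lt_finrank hS ha
  obtain ⟨c, hc⟩ : ∃ c : K, c ≠ 0 ∧ c ≠ 1 := by
    classical simpa using Infinite.exists_notMem_finset ({0, 1} : Finset K)
  obtain ⟨s, rfl⟩ := IsAlgClosed.exists_pow_nat_eq c (Nat.pos_of_ne_zero hd)
  have heval {a' : S} (h : LinearIndependent K ![a', b]) : eval a' f = eval b f :=
    eval_eq_of_linearIndependent hne a'.2 b.2 <| by
      simpa [LinearIndependent.pair_iff, Subtype.ext_iff] using h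
  have hsab : LinearIndependent K ![s • a, b] := by
    have hs : s ≠ 0 := (pow_ne_zero_iff hd).mp hc.1
    rw [LinearIndependent.pair_iff] at hab ⊢
    intro r t h
    simpa [hs] using hab (r * s) t (by rwa [mul_smul])
  have hscale : s ^ d * eval a f = eval a f := by
    rw [← eval_smul_of_isHomogeneous_s10 hf, heval hab, ← heval hsab, Submodule.coe_smul]
  exact hc.2 (mul_right_cancel₀ (hne a a.2 (by simpa using ha)) (by rw [hscale, one_mul]))

/-- The partial derivatives of `f` have no common nonzero zero on `f = 0`: when `f` is a form over
an algebraically closed field, the projective hypersurface `f = 0` is smooth. -/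
def IsNonsingularForm [CommSemiring R] (f : MvPolynomial σ R) : Prop :=
  ∀ x : σ → R, x ≠ 0 → eval x f = 0 → ∃ i, eval x (pderiv i f) ≠ 0

variable [Field K] [IsAlgClosed K] [Fintype σ] {f : MvPolynomial σ K} {d : ℕ}

theorem IsNonsingularForm.finrank_le_one (hf : IsNonsingularForm f) (hhom : f.IsHomogeneous d)
    (hd : 2 ≤ d) {S : Submodule K (σ → K)} (hS : ∀ x ∈ S, eval x f = 0)
    (hcodim : Fintype.card σ ≤ Module.finrank K S + 1) : Module.finrank K S ≤ 1 := by
  classical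
  by_contra! hdim
  obtain ⟨c, hc⟩ := exists_sup_span_singleton_eq_top (S := S) (by simpa using hcodim)
  obtain ⟨x, hxS, hx0, hx⟩ :=
    exists_mem_ne_zero_eval_eq_zero (isHomogeneous_dirDeriv hhom c) (by omega) hdim
  obtain ⟨i, hi⟩ := hf x hx0 (hS x hxS)
  let gradient : (σ → K) →ₗ[K] K := (aeval x).toLinearMap ∘ₗ dirDeriv f
  have hker : S ⊔ K ∙ c ≤ LinearMap.ker gradient := by
    refine sup_le (fun v hv => ?_) ((Submodule.span_singleton_le_iff_mem _ _).mpr ?_)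
    · exact eval_dirDeriv_eq_zero fun t => hS _ (S.add_mem hxS (S.smul_mem t hv))
    · exact LinearMap.mem_ker.mpr hx
  have hpartial : gradient (Pi.single i 1) = 0 := hker (hc ▸ Submodule.mem_top)
  exact hi (by simpa [gradient, dirDeriv_single] using hpartial)

theorem IsNonsingularForm.finrank_le_one_of_card_le_three (hσ : Fintype.card σ ≤ 3)
    (hf : IsNonsingularForm f) (hhom : f.IsHomogeneous d) (hd : 2 ≤ d)
    {S : Submodule K (σ → K)} (hS : ∀ x ∈ S, eval x f = 0) : Module.finrank K S ≤ 1 := by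
  by_contra! hdim
  exact hdim.not_ge (hf.finrank_le_one hhom hd hS (by omega))

end Forms

section Join

variable {K : Type*} {m n : ℕ}

/-- Concatenation of coordinate vectors, as a linear identification of `Kᵐ × Kⁿ` with `Kᵐ⁺ⁿ`. -/
def appendLinearEquiv (K : Type*) [Semiring K] (m n : ℕ) :
    ((Fin m → K) × (Fin n → K)) ≃ₗ[K] (Fin (m + n) → K) where
  __ := Fin.appendEquiv m n
  map_add' x y := by ext i; induction i using Fin.addCases <;> simp
  map_smul' c x := by ext i; induction i using Fin.addCases <;> simp

theorem eval_append_rename_add_rename [CommSemiring K] (f : MvPolynomial (Fin m) K)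
    (g : MvPolynomial (Fin n) K) (x : Fin m → K) (y : Fin n → K) :
    eval (Fin.append x y) (rename (Fin.castAdd n) f + rename (Fin.natAdd m) g) =
      eval x f + eval y g := by
  have hx : Fin.append x y ∘ Fin.castAdd n = x := funext (Fin.append_left x y)
  have hy : Fin.append x y ∘ Fin.natAdd m = y := funext (Fin.append_right x y)
  rw [map_add, eval_rename, eval_rename, hx, hy]

/-- The subspace `A ⊕ B` of `Kᵐ ⊕ Kⁿ = Kᵐ⁺ⁿ`; projectively, the join of `ℙ(A)` and `ℙ(B)` placed in
complementary coordinate subspaces. -/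
def joinSubspace [Semiring K] (A : Submodule K (Fin m → K)) (B : Submodule K (Fin n → K)) :
    Submodule K (Fin (m + n) → K) :=
  (A.prod B).map (appendLinearEquiv K m n).toLinearMap

theorem append_mem_joinSubspace [Semiring K] {A : Submodule K (Fin m → K)}
    {B : Submodule K (Fin n → K)} {x : Fin m → K} {y : Fin n → K} (hx : x ∈ A) (hy : y ∈ B) :
    Fin.append x y ∈ joinSubspace A B :=
  Submodule.mem_map_of_mem (f := (appendLinearEquiv K m n).toLinearMap)
    (show (x, y) ∈ A.prod B from ⟨hx, hy⟩)

theorem joinSubspace_span_singleton [Semiring K] (a : Fin m → K) (b : Fin n → K) :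
    joinSubspace (K ∙ a) (K ∙ b) = Submodule.span K {Fin.append a 0, Fin.append 0 b} := by
  rw [joinSubspace, span_singleton_prod_span_singleton, Submodule.map_span, Set.image_pair]
  rfl

theorem finrank_joinSubspace [DivisionRing K] (A : Submodule K (Fin m → K))
    (B : Submodule K (Fin n → K)) :
    Module.finrank K (joinSubspace A B) = Module.finrank K A + Module.finrank K B := by
  rw [← finrank_submodule_prod]
  exact LinearEquiv.finrank_map_eq _ _

theorem forall_mem_joinSubspace_eval_eq_zero_iff [CommSemiring K] {f : MvPolynomial (Fin m) K}
    {g : MvPolynomial (Fin n) K} (hf : eval 0 f = 0) (hg : eval 0 g = 0)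
    {A : Submodule K (Fin m → K)} {B : Submodule K (Fin n → K)} :
    (∀ z ∈ joinSubspace A B,
        eval z (rename (Fin.castAdd n) f + rename (Fin.natAdd m) g) = 0) ↔
      (∀ x ∈ A, eval x f = 0) ∧ ∀ y ∈ B, eval y g = 0 := by
  refine ⟨fun h => ⟨fun x hx => ?_, fun y hy => ?_⟩, ?_⟩
  · rw [← h _ (append_mem_joinSubspace hx B.zero_mem), eval_append_rename_add_rename, hg, add_zero]
  · rw [← h _ (append_mem_joinSubspace A.zero_mem hy), eval_append_rename_add_rename, hf, zero_add]
  · rintro ⟨hA, hB⟩ _ ⟨⟨x, y⟩, ⟨hx, hy⟩, rfl⟩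
    exact (eval_append_rename_add_rename f g x y).trans (by rw [hA x hx, hB y hy, add_zero])

theorem map_eq_self_iff_exists_eq_joinSubspace [Field K] {ω : K} (hω0 : ω ≠ 0) (hω1 : ω ≠ 1)
    {u : (Fin (m + n) → K) →ₗ[K] (Fin (m + n) → K)}
    (hu : ∀ z (i : Fin (m + n)), u z i = if (i : ℕ) < m then z i else ω * z i)
    {L : Submodule K (Fin (m + n) → K)} :
    L.map u = L ↔ ∃ A B, L = joinSubspace A B := by
  let e := appendLinearEquiv K m n
  have hconj : u ∘ₗ e.toLinearMap =
      e.toLinearMap ∘ₗ LinearMap.id.prodMap (ω • LinearMap.id) := by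
    refine LinearMap.ext fun ⟨x, y⟩ => funext fun i => ?_
    change u (Fin.append x y) i = Fin.append x (ω • y) i
    rw [hu]
    induction i using Fin.addCases <;> simp
  have hinj := Submodule.map_injective_of_injective (f := e.toLinearMap) e.injective
  obtain ⟨S, rfl⟩ : ∃ S : Submodule K ((Fin m → K) × (Fin n → K)), S.map e.toLinearMap = L :=
    ⟨L.comap e.toLinearMap, Submodule.map_comap_eq_of_surjective e.surjective L⟩
  rw [← Submodule.map_comp, hconj, Submodule.map_comp, hinj.eq_iff,
    map_id_prodMap_smul_eq_self_iff hω0 hω1]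
  exact exists₂_congr fun A B => hinj.eq_iff.symm

end Join

theorem stmt_10_general {K : Type*} [Field K] [IsAlgClosed K] {m n d e : ℕ} (hm : m ≤ 3)
    (hn : n ≤ 3) (f : MvPolynomial (Fin m) K) (g : MvPolynomial (Fin n) K)
    (hf : f.IsHomogeneous d) (hg : g.IsHomogeneous e) (hd : 2 ≤ d) (he : 2 ≤ e)
    (hfsm : IsNonsingularForm f) (hgsm : IsNonsingularForm g)
    (ω : K) (hω0 : ω ≠ 0) (hω1 : ω ≠ 1)
    (F : MvPolynomial (Fin (m + n)) K)
    (hF : F = rename (Fin.castAdd n) f + rename (Fin.natAdd m) g)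
    (u : (Fin (m + n) → K) →ₗ[K] (Fin (m + n) → K))
    (hu : ∀ (z : Fin (m + n) → K) (i : Fin (m + n)),
      u z i = if (i : ℕ) < m then z i else ω * z i)
    (L : Submodule K (Fin (m + n) → K)) :
    (Module.finrank K L = 2 ∧ (∀ z ∈ L, eval z F = 0) ∧ L.map u = L) ↔
    (∃ (a : Fin m → K) (b : Fin n → K), a ≠ 0 ∧ b ≠ 0 ∧ eval a f = 0 ∧ eval b g = 0 ∧
      L = Submodule.span K {Fin.append a (0 : Fin n → K), Fin.append (0 : Fin m → K) b}) := by
  subst hF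
  have hinv := map_eq_self_iff_exists_eq_joinSubspace hω0 hω1 hu (L := L)
  have hvanish {A : Submodule K (Fin m → K)} {B : Submodule K (Fin n → K)} :=
    forall_mem_joinSubspace_eval_eq_zero_iff (A := A) (B := B)
      (eval_zero_of_isHomogeneous hf (by omega)) (eval_zero_of_isHomogeneous hg (by omega))
  constructor
  · rintro ⟨hdim, hF, hL⟩
    obtain ⟨A, B, rfl⟩ := hinv.mp hL
    obtain ⟨hA, hB⟩ := hvanish.mp hF
    have hdimA := hfsm.finrank_le_one_of_card_le_three (by simpa) hf hd hA
    have hdimB := hgsm.finrank_le_one_of_card_le_three (by simpa) hg he hB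
    rw [finrank_joinSubspace] at hdim
    obtain ⟨a, ha, rfl⟩ := finrank_eq_one_iff_exists_eq_span_singleton.mp
      (show Module.finrank K A = 1 by omega)
    obtain ⟨b, hb, rfl⟩ := finrank_eq_one_iff_exists_eq_span_singleton.mp
      (show Module.finrank K B = 1 by omega)
    exact ⟨a, b, ha, hb, (forall_mem_span_singleton_eval_eq_zero_iff hf).mp hA,
      (forall_mem_span_singleton_eval_eq_zero_iff hg).mp hB, joinSubspace_span_singleton a b⟩
  · rintro ⟨a, b, ha, hb, hfa, hgb, hL⟩
    obtain rfl : L = joinSubspace (K ∙ a) (K ∙ b) := hL.trans (joinSubspace_span_singleton a b).symm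
    refine ⟨?_, hvanish.mpr ⟨?_, ?_⟩, hinv.mpr ⟨_, _, rfl⟩⟩
    · rw [finrank_joinSubspace, finrank_span_singleton ha, finrank_span_singleton hb]
    · exact (forall_mem_span_singleton_eval_eq_zero_iff hf).mpr hfa
    · exact (forall_mem_span_singleton_eval_eq_zero_iff hg).mpr hgb

/-- A 2-dimensional linear subspace `L ⊆ ℂ⁶` satisfies `F|_L ≡ 0` and
`u(L) = L` iff `L = span((a,0),(0,b))` for some nonzero `a, b ∈ ℂ³` with `f(a) = 0` and
`g(b) = 0`: the fixed points of `u_X` on the Fano variety of lines of `{F = 0}` are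
exactly the lines joining a point of `{f = 0}` to a point of `{g = 0}`. -/
theorem stmt_10 (f g : MvPolynomial (Fin 3) ℂ)
    (hf : f.IsHomogeneous 3) (hg : g.IsHomogeneous 3)
    (hfsm : f ≠ 0 ∧ ∀ x : Fin 3 → ℂ, x ≠ 0 → eval x f = 0 → ∃ i : Fin 3, eval x (pderiv i f) ≠ 0)
    (hgsm : g ≠ 0 ∧ ∀ x : Fin 3 → ℂ, x ≠ 0 → eval x g = 0 → ∃ i : Fin 3, eval x (pderiv i g) ≠ 0)
    (ω : ℂ) (hω3 : ω ^ 3 = 1) (hω1 : ω ≠ 1)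
    (F : MvPolynomial (Fin 6) ℂ)
    (hF : F = rename (Fin.castAdd 3) f + rename (Fin.natAdd 3) g)
    (u : (Fin 6 → ℂ) →ₗ[ℂ] (Fin 6 → ℂ))
    (hu : ∀ (z : Fin 6 → ℂ) (i : Fin 6), u z i = if (i : ℕ) < 3 then z i else ω * z i)
    (L : Submodule ℂ (Fin 6 → ℂ)) :
    (Module.finrank ℂ L = 2 ∧ (∀ z ∈ L, eval z F = 0) ∧ L.map u = L) ↔
    (∃ a b : Fin 3 → ℂ, a ≠ 0 ∧ b ≠ 0 ∧ eval a f = 0 ∧ eval b g = 0 ∧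
      L = Submodule.span ℂ {Fin.append a (0 : Fin 3 → ℂ), Fin.append (0 : Fin 3 → ℂ) b}) :=
  stmt_10_general le_rfl le_rfl f g hf hg (by norm_num) (by norm_num) hfsm.2 hgsm.2 ω
    (by rintro rfl; norm_num at hω3) hω1 F hF u hu L
end
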